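/- arXiv:2007.02235 — 4 statements merged into one kernel-verified Lean document; each statement's English description precedes it below -/
import Mathlib

section
/- (Proposition 1, PMF form.) Let X be a finite type, K ≥ 2, and let p be a probability mass function on X × Fin K (the ordinary data distribution D). Let T be an invertible K×K real matrix each of whose rows is a probability vector (entries nonnegative, each row summing to 1), with T_{i j} = P(Ȳ = j | Y = i). Define the complementary data distribution p̄ on X × Fin K by first drawing (x, y) ~ p and then drawing ȳ from the y-th row of T, keeping (x, ȳ). Then for every loss ℓ : Fin K → X → ℝ, the expectation under p̄ of the rewritten loss ℓ̄(ȳ, x) = (T⁻¹ ·ᵥ ℓ(·, x))_ȳ equals the expectation under p of the ordinary loss ℓ(y, x); that is, E_{(x,ȳ)~p̄}[e_ȳᵀ T⁻¹ ℓ(·,x)] = E_{(x,y)~p}[ℓ(y, x)]. -/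
/-- Proposition 1 (PMF form): the expectation under the complementary
distribution `p̄` of the rewritten loss `ℓ̄(ȳ, x) = (T⁻¹ ·ᵥ ℓ(·, x)) ȳ`
equals the expectation under `p` of the ordinary loss `ℓ(y, x)`. -/
theorem ure_unbiased_pmf
    (X : Type*) [Fintype X]
    (K : ℕ) (hK : 2 ≤ K)
    (p : X × Fin K → ℝ)
    (hp0 : ∀ z, 0 ≤ p z) (hp1 : ∑ z, p z = 1)
    (T : Matrix (Fin K) (Fin K) ℝ) (hT : IsUnit T.det)
    (hTrow0 : ∀ i j, 0 ≤ T i j) (hTrow1 : ∀ i, ∑ j, T i j = 1)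
    (pbar : X × Fin K → ℝ)
    (hpbar : ∀ x j, pbar (x, j) = ∑ i, p (x, i) * T i j)
    (ℓ : Fin K → X → ℝ) :
    ∑ z : X × Fin K, pbar z * (T⁻¹.mulVec (fun i => ℓ i z.1)) z.2
      = ∑ z : X × Fin K, p z * ℓ z.2 z.1 := by
  simp only [Fintype.sum_prod_type]
  refine Finset.sum_congr rfl fun x _ => ?_
  -- For fixed `x`, the row vector `pbar (x, ·)` is `p (x, ·) ᵥ* T`, and `T` cancels `T⁻¹`.
  have hrow : (fun j => pbar (x, j)) = Matrix.vecMul (fun i => p (x, i)) T := by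
    funext j
    rw [hpbar]
    rfl
  change (fun j => pbar (x, j)) ⬝ᵥ T⁻¹.mulVec (fun i => ℓ i x)
    = (fun i => p (x, i)) ⬝ᵥ (fun i => ℓ i x)
  rw [hrow, ← Matrix.dotProduct_mulVec, Matrix.mulVec_mulVec, Matrix.mul_nonsing_inv T hT,
    Matrix.one_mulVec]
end

section
/- (Pointwise unbiasedness under the uniform assumption.) Let K ≥ 2, let v : Fin K → ℝ be any loss vector, and define the rewritten loss ℓ̄(ȳ) = −(K−1) · v_ȳ + Σ_{j=1}^{K} v_j. Then for every y ∈ Fin K, averaging ℓ̄ uniformly over all complementary labels recovers the ordinary loss: (K−1)⁻¹ · Σ_{y' ∈ Fin K, y' ≠ y} ℓ̄(y') = v_y. -/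
/-- Pointwise unbiasedness under the uniform assumption: averaging the
rewritten loss `ℓ̄(ȳ) = −(K−1) v_ȳ + Σ_j v_j` uniformly over complementary
labels `y' ≠ y` recovers the ordinary loss `v_y`. -/
theorem uniform_rewritten_loss_unbiased
    (K : ℕ) (hK : 2 ≤ K)
    (v : Fin K → ℝ)
    (ℓbar : Fin K → ℝ)
    (hℓbar : ∀ ybar, ℓbar ybar = -((K : ℝ) - 1) * v ybar + ∑ j, v j)
    (y : Fin K) :
    ((K : ℝ) - 1)⁻¹ * ∑ y' ∈ Finset.univ.filter (· ≠ y), ℓbar y' = v y := by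
  have hK' : (K : ℝ) - 1 ≠ 0 := by
    have : (2 : ℝ) ≤ K := by exact_mod_cast hK
    linarith
  have hsum : ∑ y' ∈ Finset.univ.filter (· ≠ y), ℓbar y' = (∑ y', ℓbar y') - ℓbar y := by
    rw [Finset.filter_ne', ← Finset.sum_erase_add _ _ (Finset.mem_univ y), add_sub_cancel_right]
  -- Over all labels, `ℓbar` sums to `-(K - 1) S + K S = S` with `S = ∑ j, v j`;
  -- removing the term `ℓbar y = -(K - 1) v y + S` leaves `(K - 1) v y`.
  have htotal : ∑ y', ℓbar y' = ∑ j, v j := by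
    simp only [hℓbar, Finset.sum_add_distrib, ← Finset.mul_sum, Finset.sum_const,
      Finset.card_univ, Fintype.card_fin, nsmul_eq_mul]
    ring
  rw [hsum, htotal, hℓbar y, inv_mul_eq_iff_eq_mul₀ hK']
  ring
end

section
/- (Proposition 2.) Let X be a finite type, K ≥ 2, and let p be a probability mass function on X × Fin K (the ordinary distribution D). Define the complementary distribution p̄ on X × Fin K by drawing (x, y) ~ p and then ȳ uniformly at random from Fin K \ {y}, keeping (x, ȳ). Then for every classifier f : X → Fin K, the ordinary classification risk equals (K−1) times the complementary classification risk: E_{(x,y)~p}[1[y ≠ f(x)]] = (K−1) · E_{(x,ȳ)~p̄}[1[ȳ = f(x)]]. In particular, the classifiers minimizing the expected complementary 0-1 loss over p̄ are exactly those minimizing the ordinary classification error over p. -/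
/-!
For each `x`, the complementary risk only sees the mass `pbar (x, f x)`, which is `(K - 1)⁻¹` times
the total mass of the labels `y ≠ f x`, i.e. of the errors of `f` at `x`. Summing over `x` gives the
identity of risks; as `K - 1 > 0`, the two risks order classifiers in the same way and so have the
same minimizers.
-/

/-- Proposition 2: the ordinary classification risk equals `(K−1)` times the
complementary classification risk, where the complementary distribution `p̄`
draws `(x, y) ~ p` and then `ȳ` uniformly from `Fin K \ {y}`.  In particular,
the minimizers of the complementary risk are exactly the minimizers of the
ordinary classification error. -/
theorem complementary_zero_one_risk
    (X : Type*) [Fintype X]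
    (K : ℕ) (hK : 2 ≤ K)
    (p : X × Fin K → ℝ)
    (hp0 : ∀ z, 0 ≤ p z) (hp1 : ∑ z, p z = 1)
    (pbar : X × Fin K → ℝ)
    (hpbar : ∀ x ybar, pbar (x, ybar)
      = ∑ y, p (x, y) * (if ybar = y then 0 else ((K : ℝ) - 1)⁻¹)) :
    (∀ f : X → Fin K,
        ∑ z : X × Fin K, p z * (if z.2 ≠ f z.1 then (1 : ℝ) else 0)
          = ((K : ℝ) - 1) *
            ∑ z : X × Fin K, pbar z * (if z.2 = f z.1 then (1 : ℝ) else 0)) ∧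
    (∀ f : X → Fin K,
        (∀ f' : X → Fin K,
            ∑ z : X × Fin K, pbar z * (if z.2 = f z.1 then (1 : ℝ) else 0)
              ≤ ∑ z : X × Fin K, pbar z * (if z.2 = f' z.1 then (1 : ℝ) else 0))
        ↔ (∀ f' : X → Fin K,
            ∑ z : X × Fin K, p z * (if z.2 ≠ f z.1 then (1 : ℝ) else 0)
              ≤ ∑ z : X × Fin K, p z * (if z.2 ≠ f' z.1 then (1 : ℝ) else 0))) := by
  have hK1 : (0 : ℝ) < (K : ℝ) - 1 := by
    have : (2 : ℝ) ≤ K := by exact_mod_cast hK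
    linarith
  have key : ∀ f : X → Fin K,
      ∑ z : X × Fin K, p z * (if z.2 ≠ f z.1 then (1 : ℝ) else 0)
        = ((K : ℝ) - 1) *
          ∑ z : X × Fin K, pbar z * (if z.2 = f z.1 then (1 : ℝ) else 0) := by
    intro f
    rw [Fintype.sum_prod_type, Fintype.sum_prod_type, Finset.mul_sum]
    refine Finset.sum_congr rfl fun x _ => ?_
    -- Only `ȳ = f x` contributes to the inner complementary sum.
    simp only [mul_ite, mul_one, mul_zero, Finset.sum_ite_eq', Finset.sum_ite_eq,
      Finset.mem_univ, if_true]
    rw [hpbar, Finset.mul_sum]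
    refine Finset.sum_congr rfl fun y _ => ?_
    by_cases h : y = f x
    · simp [h]
    · rw [if_pos h, if_neg (Ne.symm h)]
      field_simp
  refine ⟨key, fun f => forall_congr' fun f' => ?_⟩
  rw [key f, key f', mul_le_mul_iff_right₀ hK1]
end

section
/- (Proposition 3: an unbiased risk estimator gives an unbiased gradient estimator, uniform case.) Let K ≥ 2, let E be a real normed vector space (the parameter space), let θ₀ ∈ E, and let ℓ : Fin K → E → ℝ be such that for each j ∈ Fin K the map θ ↦ ℓ(j, θ) is differentiable at θ₀. Define the rewritten loss ℓ̄ : Fin K → E → ℝ by ℓ̄(ȳ, θ) = −(K−1) · ℓ(ȳ, θ) + Σ_{j=1}^{K} ℓ(j, θ). Then for every y ∈ Fin K, the uniform average over complementary labels of the derivative of ℓ̄ equals the derivative of the ordinary loss: (K−1)⁻¹ • Σ_{y' ∈ Fin K, y' ≠ y} fderiv ℝ (θ ↦ ℓ̄(y', θ)) θ₀ = fderiv ℝ (θ ↦ ℓ(y, θ)) θ₀. -/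
/-!
Differentiation is linear, so the gradient of the rewritten loss at label `y'` is
`-(K - 1) • D y' + S`, where `D j` is the gradient of `ℓ j` and `S = ∑ j, D j`. Summing over
the `K - 1` labels `y' ≠ y` gives `-(K - 1) • (S - D y) + (K - 1) • S = (K - 1) • D y`, and
`K - 1` is nonzero because `K ≥ 2`.
-/

/-- Proposition 3: under the uniform assumption, the uniform average over
complementary labels of the derivative of the rewritten loss equals the
derivative of the ordinary loss (an unbiased gradient estimator). -/
theorem ure_gives_uge_uniform
    (K : ℕ) (hK : 2 ≤ K)
    (E : Type*) [NormedAddCommGroup E] [NormedSpace ℝ E]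
    (θ₀ : E)
    (ℓ : Fin K → E → ℝ)
    (hdiff : ∀ j : Fin K, DifferentiableAt ℝ (ℓ j) θ₀)
    (ℓbar : Fin K → E → ℝ)
    (hℓbar : ∀ ybar θ, ℓbar ybar θ = -((K : ℝ) - 1) * ℓ ybar θ + ∑ j, ℓ j θ)
    (y : Fin K) :
    ((K : ℝ) - 1)⁻¹ •
        ∑ y' ∈ Finset.univ.filter (· ≠ y), fderiv ℝ (fun θ => ℓbar y' θ) θ₀
      = fderiv ℝ (fun θ => ℓ y θ) θ₀ := by
  have hK1 : (K : ℝ) - 1 ≠ 0 := by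
    have : (2 : ℝ) ≤ K := by exact_mod_cast hK
    linarith
  have hbar : ∀ y' : Fin K, fderiv ℝ (fun θ => ℓbar y' θ) θ₀
      = -((K : ℝ) - 1) • fderiv ℝ (ℓ y') θ₀ + ∑ j, fderiv ℝ (ℓ j) θ₀ := by
    intro y'
    have hfun : (fun θ => ℓbar y' θ)
        = fun θ => -((K : ℝ) - 1) * ℓ y' θ + ∑ j, ℓ j θ := funext (hℓbar y')
    rw [hfun]
    exact (((hdiff y').hasFDerivAt.const_mul _).add
      (HasFDerivAt.fun_sum fun j _ => (hdiff j).hasFDerivAt)).fderiv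
  -- Summing over all `K` labels leaves one copy of the total gradient; removing the
  -- `y` term then leaves exactly `(K - 1)` times the gradient of `ℓ y`.
  have hsum : ∑ y' ∈ Finset.univ.filter (· ≠ y), fderiv ℝ (fun θ => ℓbar y' θ) θ₀
      = ((K : ℝ) - 1) • fderiv ℝ (ℓ y) θ₀ := by
    rw [Finset.filter_ne' Finset.univ y, ← add_left_inj (fderiv ℝ (fun θ => ℓbar y θ) θ₀),
      Finset.sum_erase_add _ _ (Finset.mem_univ y)]
    simp only [hbar, Finset.sum_add_distrib, ← Finset.smul_sum, Finset.sum_const,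
      Finset.card_univ, Fintype.card_fin, ← Nat.cast_smul_eq_nsmul ℝ]
    module
  rw [hsum, inv_smul_smul₀ hK1]
end
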